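/- (Finite-volume L² transport bound) For every s ∈ (−2, −1] and β > 0 there exists a constant C = C(s, β) > 0 such that for every integer n ≥ 1, the expected squared transport cost from the Gibbs configuration to the centered unit lattice is at most linear in the volume: E_{P_n^{(s,β)}}[∑_{j=1}^n (x_{(j)} − y_j)²] ≤ C n. -/

import Mathlib

open MeasureTheory Real

/-- The box `□ₙ = [−n/2, n/2] ⊂ ℝ`. -/
noncomputable def box (n : ℕ) : Set ℝ := Set.Icc (-(n : ℝ) / 2) ((n : ℝ) / 2)

/-- The background-neutralized energy `H_{n,g}` of the configuration `x ∈ (□ₙ)ⁿ`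
for the pairwise kernel `g`. -/
noncomputable def Hgen (n : ℕ) (g : ℝ → ℝ) (x : Fin n → ℝ) : ℝ :=
  (1 / 2) * ∑ i : Fin n, ∑ j : Fin n, g (x i - x j)
    - ∑ i : Fin n, ∫ y in box n, g (x i - y)
    + (1 / 2) * ∫ u in box n, ∫ v in box n, g (u - v)

/-- The non-singular Riesz kernel `g_s(t) = −|t|^{−s}` (with `g_s 0 = 0`),
for `−2 < s < 0`. -/
noncomputable def rieszKernel (s t : ℝ) : ℝ := -(|t| ^ (-s))

/-- The `j`-th particle of the centered unit lattice in `□ₙ`, `y_j = j − (n+1)/2`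
(here `j : Fin n` is `0`-based, so the `1`-based index is `j+1`). -/
noncomputable def latticeY (n : ℕ) (j : Fin n) : ℝ := ((j : ℝ) + 1) - ((n : ℝ) + 1) / 2

/-- The partition function `Z_n^{(s,β)} = n^{−n} ∫_{(□ₙ)ⁿ} exp(−β H_n^{(s)}(x)) dx`. -/
noncomputable def Zpart (s β : ℝ) (n : ℕ) : ℝ :=
  ((n : ℝ) ^ n)⁻¹ *
    ∫ x in Set.univ.pi (fun _ : Fin n => box n),
      Real.exp (-β * Hgen n (rieszKernel s) x)


/-- The energy with its intended bracketing: it differs from `Hgen` by a constant. -/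
noncomputable def Hok (n : ℕ) (g : ℝ → ℝ) (x : Fin n → ℝ) : ℝ :=
  (1 / 2) * (∑ i : Fin n, ∑ j : Fin n, g (x i - x j))
    - (∑ i : Fin n, ∫ y in box n, g (x i - y))
    + (1 / 2) * ∫ u in box n, (∫ v in box n, g (u - v))

lemma fub {Ω E : Type*} [MeasurableSpace Ω] [MeasurableSpace E] (μ : Measure Ω) [SFinite μ]
    (ν : Measure E) [SFinite ν] (f : Ω → E → ℝ) (hm : Measurable (Function.uncurry f))
    (h0 : ∀ θ e, 0 ≤ f θ e) (h1 : ∀ e, Integrable (fun θ => f θ e) μ)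
    (h2 : Integrable (fun e => ∫ θ, f θ e ∂μ) ν) :
    Integrable (fun θ => ∫ e, f θ e ∂ν) μ ∧ ∫ e, ∫ θ, f θ e ∂μ ∂ν = ∫ θ, ∫ e, f θ e ∂ν ∂μ := by
  have hI : Integrable (Function.uncurry f) (μ.prod ν) := by
    rw [integrable_prod_iff' hm.aestronglyMeasurable]
    refine ⟨Filter.Eventually.of_forall h1, ?_⟩
    simpa [Function.uncurry, Real.norm_eq_abs, abs_of_nonneg (h0 _ _)] using h2
  exact ⟨hI.integral_prod_left, (integral_integral_swap hI).symm⟩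

lemma vol_box (n : ℕ) : volume (box n) = n := by
  rw [box, Real.volume_Icc]
  rw [show (n:ℝ)/2 - -(n:ℝ)/2 = n by ring]
  simp

instance (n : ℕ) : IsFiniteMeasure (volume.restrict (box n)) :=
  ⟨by simp [vol_box]⟩

lemma meas_box (n : ℕ) : MeasurableSet (box n) := measurableSet_Icc

lemma box_const (n : ℕ) (c : ℝ) : ∫ _y in box n, c = n * c := by
  simp [Measure.real, vol_box]

lemma integrable_box_cont (n : ℕ) {k : ℝ → ℝ} (hk : Continuous k) :
    Integrable k (volume.restrict (box n)) :=
  (hk.continuousOn.integrableOn_compact isCompact_Icc : IntegrableOn k (Set.Icc _ _) volume)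

lemma integrable_box_cont2 (n : ℕ) {k : ℝ × ℝ → ℝ} (hk : Continuous k) :
    Integrable k ((volume.restrict (box n)).prod (volume.restrict (box n))) := by
  rw [Measure.prod_restrict, ← Measure.volume_eq_prod]
  exact hk.continuousOn.integrableOn_compact (isCompact_Icc.prod isCompact_Icc)

lemma pointwise_id (n : ℕ) (φ : ℝ → ℝ) (hm : Measurable φ) (M : ℝ) (hM : ∀ u, |φ u| ≤ M)
    (x : Fin n → ℝ) :
    (∑ i, φ (x i) - ∫ y in box n, φ y) ^ 2 =
      -(1 / 2) * ∑ i, ∑ j, (φ (x i) - φ (x j)) ^ 2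
      + (∑ i, ∫ y in box n, (φ (x i) - φ y) ^ 2)
      - (1 / 2) * ∫ p, (φ p.1 - φ p.2) ^ 2
          ∂((volume.restrict (box n)).prod (volume.restrict (box n))) := by
  have i1 : Integrable φ (volume.restrict (box n)) :=
    Integrable.of_bound hm.aestronglyMeasurable M (Filter.Eventually.of_forall hM)
  have i2 : Integrable (fun y => φ y ^ 2) (volume.restrict (box n)) := by
    refine Integrable.of_bound (hm.pow_const 2).aestronglyMeasurable (M ^ 2)
      (Filter.Eventually.of_forall fun y => ?_)
    rw [Real.norm_eq_abs, abs_pow]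
    exact pow_le_pow_left₀ (abs_nonneg _) (hM y) 2
  have e1 : ∀ c, ∫ y in box n, (c - φ y) ^ 2
      = n * c ^ 2 - 2 * c * (∫ y in box n, φ y) + ∫ y in box n, φ y ^ 2 := by
    intro c
    have : ∀ y, (c - φ y) ^ 2 = c ^ 2 - 2 * c * φ y + φ y ^ 2 := fun y => by ring
    simp_rw [this]
    have j1 : Integrable (fun y => c ^ 2 - 2 * c * φ y) (volume.restrict (box n)) :=
      (integrable_const _).sub (i1.const_mul _)
    rw [integral_add j1 i2,
      integral_sub (integrable_const _) (i1.const_mul _), integral_const_mul, box_const]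
  have hI : Integrable (fun p : ℝ × ℝ => (φ p.1 - φ p.2) ^ 2)
      ((volume.restrict (box n)).prod (volume.restrict (box n))) := by
    refine Integrable.of_bound (by fun_prop) ((M + M) ^ 2)
      (Filter.Eventually.of_forall fun p => ?_)
    rw [Real.norm_eq_abs, abs_pow]
    exact pow_le_pow_left₀ (abs_nonneg _)
      ((abs_sub _ _).trans (add_le_add (hM _) (hM _))) 2
  rw [integral_prod _ hI]
  simp only [e1]
  have j1 : Integrable (fun y => n * φ y ^ 2 - 2 * φ y * ∫ z in box n, φ z)
      (volume.restrict (box n)) := (i2.const_mul _).sub ((i1.const_mul 2).mul_const _)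
  rw [integral_add j1 (integrable_const _),
      integral_sub (i2.const_mul _) ((i1.const_mul 2).mul_const _), integral_const_mul,
      integral_mul_const, integral_const_mul, box_const]
  have e2 : ∑ i, ∑ j, (φ (x i) - φ (x j)) ^ 2
      = 2 * n * ∑ i, φ (x i) ^ 2 - 2 * (∑ i, φ (x i)) ^ 2 := by
    have : ∀ i j, (φ (x i) - φ (x j)) ^ 2
        = φ (x i) ^ 2 - 2 * (φ (x i) * φ (x j)) + φ (x j) ^ 2 := fun i j => by ring
    simp_rw [this, Finset.sum_add_distrib, Finset.sum_sub_distrib, ← Finset.mul_sum,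
      ← Finset.sum_mul]
    simp [← Finset.mul_sum]
    ring
  rw [e2]
  simp only [Finset.sum_add_distrib, Finset.sum_sub_distrib, ← Finset.mul_sum, ← Finset.sum_mul]
  simp
  ring

lemma H_rep {Ω : Type*} [MeasurableSpace Ω] (μ : Measure Ω) [SFinite μ] (Φ : Ω → ℝ → ℝ)
    (hm : Measurable (Function.uncurry Φ)) (M : Ω → ℝ) (hM : ∀ θ u, |Φ θ u| ≤ M θ)
    (k : ℝ → ℝ) (hk : Continuous k)
    (hint : ∀ u v, Integrable (fun θ => (Φ θ u - Φ θ v) ^ 2) μ)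
    (hk' : ∀ u v, ∫ θ, (Φ θ u - Φ θ v) ^ 2 ∂μ = k (u - v)) (n : ℕ) (x : Fin n → ℝ) :
    Integrable (fun θ => (∑ i, Φ θ (x i) - ∫ y in box n, Φ θ y) ^ 2) μ ∧
    Hok n (fun t => -k t) x = ∫ θ, (∑ i, Φ θ (x i) - ∫ y in box n, Φ θ y) ^ 2 ∂μ := by
  have hmθ : ∀ θ, Measurable (Φ θ) := fun θ => hm.comp measurable_prodMk_left
  have e : ∀ θ, _ := fun θ => pointwise_id n (Φ θ) (hmθ θ) (M θ) (hM θ) x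
  have hmu : ∀ u, Measurable (fun θ => Φ θ u) := fun u => hm.comp measurable_prodMk_right
  have A : ∀ i, _ := fun i => fub μ (volume.restrict (box n)) (fun θ y => (Φ θ (x i) - Φ θ y) ^ 2)
    (by
      have h1 : Measurable fun p : Ω × ℝ => Φ p.1 (x i) := (hmu (x i)).comp measurable_fst
      exact (h1.sub hm).pow_const 2) (fun _ _ => sq_nonneg _) (fun y => hint _ _)
    (by
      simp only [hk']
      exact integrable_box_cont n (by fun_prop))
  have B := fub μ ((volume.restrict (box n)).prod (volume.restrict (box n)))
    (fun θ (p : ℝ × ℝ) => (Φ θ p.1 - Φ θ p.2) ^ 2)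
    (by
      have h1 : Measurable fun p : Ω × (ℝ × ℝ) => Φ p.1 p.2.1 :=
        hm.comp (measurable_fst.prodMk (measurable_fst.comp measurable_snd))
      have h2 : Measurable fun p : Ω × (ℝ × ℝ) => Φ p.1 p.2.2 :=
        hm.comp (measurable_fst.prodMk (measurable_snd.comp measurable_snd))
      exact (h1.sub h2).pow_const 2) (fun _ _ => sq_nonneg _) (fun y => hint _ _)
    (by
      simp only [hk']
      exact integrable_box_cont2 n (by fun_prop))
  have I1 : Integrable (fun θ => -(1 / 2) * ∑ i, ∑ j, (Φ θ (x i) - Φ θ (x j)) ^ 2) μ :=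
    (integrable_finsetSum _ fun i _ => integrable_finsetSum _ fun j _ => hint _ _).const_mul _
  have I2 : Integrable (fun θ => ∑ i, ∫ y in box n, (Φ θ (x i) - Φ θ y) ^ 2) μ :=
    integrable_finsetSum _ fun i _ => (A i).1
  have I3 := B.1.const_mul (1 / 2)
  simp_rw [e]
  have I12 : Integrable (fun θ => -(1 / 2) * ∑ i, ∑ j, (Φ θ (x i) - Φ θ (x j)) ^ 2
      + ∑ i, ∫ y in box n, (Φ θ (x i) - Φ θ y) ^ 2) μ := I1.add I2
  refine ⟨I12.sub I3, ?_⟩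
  rw [integral_sub I12 I3, integral_add I1 I2, integral_const_mul, integral_const_mul,
    integral_finsetSum _ fun i _ => (A i).1, ← B.2,
    integral_finsetSum _ fun i _ => integrable_finsetSum _ fun j _ => hint _ _]
  simp_rw [integral_finsetSum _ fun j _ => hint _ _, ← (A _).2, hk']
  rw [integral_prod _ (integrable_box_cont2 n (by fun_prop))]
  simp [Hok, integral_neg]
  ring

lemma Hgen_eq (n : ℕ) (g : ℝ → ℝ) (hg : Continuous g) :
    ∃ c : ℝ, ∀ x, Hgen n g x = Hok n g x + c := by
  refine ⟨Hgen n g 0 - Hok n g 0, fun x => ?_⟩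
  have h : ∀ x : Fin n → ℝ, ∀ c : ℝ, ∑ i, ∫ y in box n, (g (x i - y) + c)
      = (∑ i, ∫ y in box n, g (x i - y)) + n * (n * c) := by
    intro x c
    have : ∀ i, ∫ y in box n, (g (x i - y) + c) = (∫ y in box n, g (x i - y)) + n * c := by
      intro i
      rw [integral_add (integrable_box_cont n (by fun_prop)) (integrable_const _), box_const]
    simp_rw [this, Finset.sum_add_distrib]
    simp
  unfold Hgen Hok
  rw [h, h]
  ring

/-- discrepancy function -/
noncomputable def Dd (n : ℕ) (x : Fin n → ℝ) (t : ℝ) : ℝ :=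
  (∑ i, if t < x i then (1 : ℝ) else 0) - ((n : ℝ) / 2 - t)

lemma Dd_meas (n : ℕ) (x : Fin n → ℝ) : Measurable (Dd n x) := by
  unfold Dd
  refine Measurable.sub (Finset.measurable_sum _ fun i _ => ?_) (by fun_prop)
  exact Measurable.ite measurableSet_Iio measurable_const measurable_const

lemma Dd_bdd (n : ℕ) (x : Fin n → ℝ) {t : ℝ} (ht : t ∈ box n) : |Dd n x t| ≤ 2 * n := by
  unfold Dd
  have h1 : 0 ≤ ∑ i, (if t < x i then (1 : ℝ) else 0) :=
    Finset.sum_nonneg fun i _ => by split_ifs <;> norm_num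
  have h2 : ∑ i, (if t < x i then (1 : ℝ) else 0) ≤ n := by
    calc _ ≤ ∑ i : Fin n, (1 : ℝ) := Finset.sum_le_sum fun i _ => by split_ifs <;> norm_num
      _ = n := by simp
  obtain ⟨h3, h4⟩ := ht
  rw [abs_le]
  constructor <;> linarith

lemma integrable_of_box_bdd (n : ℕ) {f : ℝ → ℝ} (hf : Measurable f) (M : ℝ)
    (hM : ∀ t ∈ box n, |f t| ≤ M) : IntegrableOn f (box n) := by
  refine Integrable.of_bound hf.aestronglyMeasurable M ?_
  exact (ae_restrict_iff' (meas_box n)).2 (Filter.Eventually.of_forall hM)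

lemma Dd_sq_int (n : ℕ) (x : Fin n → ℝ) : IntegrableOn (fun t => Dd n x t ^ 2) (box n) := by
  refine integrable_of_box_bdd n ((Dd_meas n x).pow_const 2) ((2 * n) ^ 2) fun t ht => ?_
  rw [abs_pow]
  exact pow_le_pow_left₀ (abs_nonneg _) (Dd_bdd n x ht) 2

lemma riesz_cont {s : ℝ} (hs' : s ≤ -1) : Continuous (rieszKernel s) := by
  unfold rieszKernel
  exact (continuous_abs.rpow_const fun x => Or.inr (by linarith)).neg

lemma int_step (u v : ℝ) : Integrable (fun t : ℝ =>
      ((if t < u then (1 : ℝ) else 0) - (if t < v then (1 : ℝ) else 0)) ^ 2) ∧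
    ∫ t : ℝ, ((if t < u then (1 : ℝ) else 0) - (if t < v then (1 : ℝ) else 0)) ^ 2 = |u - v| := by
  have e : (fun t : ℝ =>
      ((if t < u then (1 : ℝ) else 0) - (if t < v then (1 : ℝ) else 0)) ^ 2)
      = (Set.Ico (min u v) (max u v)).indicator (fun _ => (1 : ℝ)) := by
    funext t
    simp only [Set.indicator, Set.mem_Ico, min_le_iff, lt_max_iff]
    split_ifs <;> first | (exfalso; grind) | norm_num
  rw [e]
  constructor
  · exact (integrable_indicator_iff measurableSet_Ico).2 (integrableOn_const (by simp))
  · rw [integral_indicator measurableSet_Ico]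
    simp [max_sub_min_eq_abs']

lemma D_bound_one : ∀ n (x : Fin n → ℝ), ∫ t in box n, Dd n x t ^ 2 ≤ Hok n (rieszKernel (-1)) x := by
  intro n x
  have hm : Measurable (Function.uncurry fun (t u : ℝ) => if t < u then (1 : ℝ) else 0) :=
    Measurable.ite (measurableSet_lt measurable_fst measurable_snd) measurable_const
      measurable_const
  obtain ⟨h1, h2⟩ := H_rep (volume : Measure ℝ) (fun t u => if t < u then (1 : ℝ) else 0) hm
    (fun _ => 1) (fun θ u => by split_ifs <;> simp) (fun r => |r|) continuous_abs
    (fun u v => (int_step u v).1) (fun u v => (int_step u v).2) n x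
  have e : rieszKernel (-1) = fun t => -|t| := by
    funext t; simp [rieszKernel]
  rw [e, h2]
  calc ∫ t in box n, Dd n x t ^ 2
      = ∫ t in box n, (∑ i, (if t < x i then (1 : ℝ) else 0)
          - ∫ y in box n, if t < y then (1 : ℝ) else 0) ^ 2 := by
        refine setIntegral_congr_fun (meas_box n) fun t ht => ?_
        have : ∫ y in box n, (if t < y then (1 : ℝ) else 0) = n / 2 - t := by
          have e : (fun y : ℝ => if t < y then (1 : ℝ) else 0)
            = (Set.Ioi t).indicator (fun _ => (1 : ℝ)) := by
              funext y; simp [Set.indicator]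
          rw [e, setIntegral_indicator measurableSet_Ioi]
          have : box n ∩ Set.Ioi t = Set.Ioc t (n / 2) := by
            ext y
            simp only [box, Set.mem_inter_iff, Set.mem_Icc, Set.mem_Ioi, Set.mem_Ioc] at ht ⊢
            constructor
            · rintro ⟨⟨_, _⟩, _⟩; constructor <;> assumption
            · rintro ⟨_, _⟩; exact ⟨⟨by linarith, by assumption⟩, by assumption⟩
          rw [this]
          simp [ht.2]
        simp only [Dd, this]
    _ ≤ _ := setIntegral_le_integral h1 (Filter.Eventually.of_forall fun _ => sq_nonneg _)

/-- truncated ramp -/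
noncomputable def cl (l t u : ℝ) : ℝ := max 0 (min l (u - t))

lemma cl_cont : Continuous (fun p : ℝ × ℝ × ℝ => cl p.1 p.2.1 p.2.2) := by
  unfold cl; fun_prop

lemma cl_nonneg (l t u : ℝ) : 0 ≤ cl l t u := le_max_left _ _

lemma cl_le {l : ℝ} (hl : 0 ≤ l) (t u : ℝ) : cl l t u ≤ l := by
  unfold cl; exact max_le hl (min_le_left _ _)

noncomputable def Jf (l u v : ℝ) : ℝ := ∫ t, (cl l t u - cl l t v) ^ 2

lemma J_scale {r : ℝ} (hr : 0 < r) (l v : ℝ) : Jf l (v + r) v = r ^ 3 * Jf (r⁻¹ * l) 1 0 := by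
  unfold Jf
  have e : ∀ t, (cl (r⁻¹ * l) t 1 - cl (r⁻¹ * l) t 0) ^ 2
      = (r ^ 2)⁻¹ * (cl l (r * t + v) (v + r) - cl l (r * t + v) v) ^ 2 := by
    intro t
    have h : ∀ u, r * cl (r⁻¹ * l) t u = cl l (r * t + v) (v + r * u) := by
      intro u
      unfold cl
      rw [mul_max_of_nonneg _ _ hr.le, mul_min_of_nonneg _ _ hr.le]
      congr 2
      · simp
      · field_simp
      · ring
    have h1 := h 1
    have h0 := h 0
    simp only [mul_one, mul_zero, add_zero] at h1 h0
    rw [← h1, ← h0]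
    field_simp
  simp_rw [e]
  rw [integral_const_mul]
  have := Measure.integral_comp_mul_left
    (fun t => (cl l (t + v) (v + r) - cl l (t + v) v) ^ 2) r
  rw [this, integral_add_right_eq_self (fun t => (cl l t (v + r) - cl l t v) ^ 2),
    abs_of_pos (inv_pos.2 hr), smul_eq_mul]
  field_simp

lemma cl_lip {l : ℝ} (t u v : ℝ) : |cl l t u - cl l t v| ≤ |u - v| := by
  unfold cl
  have h1 := abs_max_sub_max_le_max 0 (min l (u - t)) 0 (min l (v - t))
  have h2 := abs_min_sub_min_le_max l (u - t) l (v - t)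
  simp only [sub_self, abs_zero, sub_sub_sub_cancel_right] at h1 h2
  exact h1.trans (max_le (abs_nonneg _) (h2.trans (max_le (abs_nonneg _) le_rfl)))

lemma cl_diff_supp {l : ℝ} (hl : 0 < l) (t u v : ℝ) :
    (cl l t u - cl l t v) ^ 2 ≤
      (Set.Icc (min u v - l) (max u v)).indicator (fun _ => (min |u - v| l) ^ 2) t := by
  simp only [Set.indicator, Set.mem_Icc]
  have hc : |cl l t u - cl l t v| ≤ min |u - v| l := by
    refine le_min (cl_lip t u v) ?_
    have := cl_nonneg l t u
    have := cl_nonneg l t v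
    have := cl_le hl.le t u
    have := cl_le hl.le t v
    rw [abs_le]; constructor <;> linarith
  split_ifs with h
  · rw [← sq_abs]
    exact pow_le_pow_left₀ (abs_nonneg _) hc 2
  · have : cl l t u = cl l t v := by
      unfold cl
      rw [not_and_or, not_le, not_le] at h
      have := min_le_left u v
      have := min_le_right u v
      have := le_max_left u v
      have := le_max_right u v
      rcases h with h | h
      · rw [min_eq_left (by linarith), min_eq_left (by linarith)]
      · rw [max_eq_left ((min_le_right _ _).trans (by linarith)),
          max_eq_left ((min_le_right _ _).trans (by linarith))]
    simp [this]

lemma ind_int (a b c : ℝ) : Integrable ((Set.Icc a b).indicator (fun _ => c)) :=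
  (integrable_indicator_iff measurableSet_Icc).2 (integrableOn_const (by simp))

lemma cl_diff_int {l : ℝ} (hl : 0 < l) (u v : ℝ) :
    Integrable (fun t => (cl l t u - cl l t v) ^ 2) := by
  refine (ind_int (min u v - l) (max u v) ((min |u - v| l) ^ 2)).mono' ?_ ?_
  · have : Continuous fun t => (cl l t u - cl l t v) ^ 2 := by unfold cl; fun_prop
    exact this.aestronglyMeasurable
  · refine Filter.Eventually.of_forall fun t => ?_
    rw [Real.norm_eq_abs, abs_of_nonneg (sq_nonneg _)]
    exact cl_diff_supp hl t u v

lemma J_le {l : ℝ} (hl : 0 < l) : Jf l 1 0 ≤ (1 + l) * (min 1 l) ^ 2 := by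
  unfold Jf
  calc _ ≤ ∫ t, (Set.Icc (min 1 0 - l) (max 1 0)).indicator (fun _ => (min |1 - 0| l) ^ 2) t :=
        integral_mono (cl_diff_int hl 1 0) (ind_int _ _ _) (fun t => cl_diff_supp hl t 1 0)
    _ = _ := by
        rw [integral_indicator measurableSet_Icc]
        simp [Measure.real]
        left
        linarith

lemma J_nonneg (l u v : ℝ) : 0 ≤ Jf l u v := integral_nonneg fun _ => sq_nonneg _

lemma J_ge {l : ℝ} (hl : 1 ≤ l) : 1 / 8 ≤ Jf l 1 0 := by
  unfold Jf
  calc (1 / 8 : ℝ) = ∫ t, (Set.Icc (0:ℝ) (1 / 2)).indicator (fun _ => (1 / 4 : ℝ)) t := by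
        rw [integral_indicator measurableSet_Icc]
        simp [Measure.real]
        norm_num
    _ ≤ _ := by
        refine integral_mono (ind_int _ _ _) (cl_diff_int (by linarith) 1 0) fun t => ?_
        simp only [Set.indicator, Set.mem_Icc]
        split_ifs with h
        · obtain ⟨h1, h2⟩ := h
          unfold cl
          rw [min_eq_right (by linarith), min_eq_right (by linarith), max_eq_right (by linarith),
            max_eq_left (by linarith)]
          nlinarith
        · positivity

lemma J_meas (u v : ℝ) : Measurable (fun l => Jf l u v) := by
  unfold Jf
  have : Continuous (fun p : ℝ × ℝ => (cl p.1 p.2 u - cl p.1 p.2 v) ^ 2) := by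
    unfold cl; fun_prop
  exact (this.stronglyMeasurable.integral_prod_right).measurable

lemma J_int_one {α : ℝ} (h1 : 1 < α) (h2 : α < 2) :
    IntegrableOn (fun l => l ^ (-(4 - α)) * Jf l 1 0) (Set.Ioi 0) := by
  rw [← Set.Ioc_union_Ioi_eq_Ioi (zero_le_one' ℝ)]
  have hmeas : Measurable (fun l : ℝ => l ^ (-(4 - α)) * Jf l 1 0) :=
    (by fun_prop : Measurable fun l : ℝ => l ^ (-(4 - α))).mul (J_meas 1 0)
  refine IntegrableOn.union ?_ ?_
  · have h : IntegrableOn (fun l : ℝ => 2 * l ^ (α - 2)) (Set.Ioc 0 1) := by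
      have := (intervalIntegral.intervalIntegrable_rpow' (a := 0) (b := 1)
        (r := α - 2) (by linarith)).1
      exact this.const_mul 2
    refine h.mono' hmeas.aestronglyMeasurable ?_
    refine (ae_restrict_iff' measurableSet_Ioc).2 (Filter.Eventually.of_forall fun l hl => ?_)
    have hl0 := hl.1
    rw [Real.norm_eq_abs, abs_of_nonneg (mul_nonneg (by positivity) (J_nonneg _ _ _))]
    have := J_le hl0
    rw [min_eq_right hl.2] at this
    calc l ^ (-(4 - α)) * Jf l 1 0 ≤ l ^ (-(4 - α)) * (2 * l ^ (2:ℝ)) := by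
          gcongr
          rw [Real.rpow_two]
          nlinarith [hl.2, sq_nonneg l]
      _ = 2 * (l ^ (-(4 - α)) * l ^ (2:ℝ)) := by ring
      _ = _ := by rw [← Real.rpow_add hl0]; ring_nf
  · have h : IntegrableOn (fun l : ℝ => 2 * l ^ (α - 3)) (Set.Ioi 1) :=
      (integrableOn_Ioi_rpow_of_lt (by linarith) zero_lt_one).const_mul 2
    refine h.mono' hmeas.aestronglyMeasurable ?_
    refine (ae_restrict_iff' measurableSet_Ioi).2 (Filter.Eventually.of_forall fun l hl => ?_)
    have hl1 : 1 < l := hl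
    have hl0 : 0 < l := by linarith
    rw [Real.norm_eq_abs, abs_of_nonneg (mul_nonneg (by positivity) (J_nonneg _ _ _))]
    have := J_le hl0
    rw [min_eq_left hl1.le] at this
    calc l ^ (-(4 - α)) * Jf l 1 0 ≤ l ^ (-(4 - α)) * (2 * l ^ (1:ℝ)) := by
          gcongr
          rw [Real.rpow_one]
          nlinarith
      _ = 2 * (l ^ (-(4 - α)) * l ^ (1:ℝ)) := by ring
      _ = _ := by rw [← Real.rpow_add hl0]; ring_nf

noncomputable def Cc (α : ℝ) : ℝ := ∫ l in Set.Ioi (0:ℝ), l ^ (-(4 - α)) * Jf l 1 0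

lemma Cc_pos {α : ℝ} (h1 : 1 < α) (h2 : α < 2) : 0 < Cc α := by
  have hI := J_int_one h1 h2
  have hsub : Set.Ioc (1:ℝ) 2 ⊆ Set.Ioi 0 := fun l hl => by
    have := hl.1
    simp only [Set.mem_Ioi]; linarith
  have hnn : ∀ l ∈ Set.Ioi (0:ℝ), 0 ≤ l ^ (-(4 - α)) * Jf l 1 0 := fun l hl =>
    mul_nonneg (Real.rpow_nonneg (le_of_lt hl) _) (J_nonneg _ _ _)
  have h3 : ∫ l in Set.Ioc (1:ℝ) 2, l ^ (-(4 - α)) * Jf l 1 0 ≤ Cc α :=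
    setIntegral_mono_set hI
      ((ae_restrict_iff' measurableSet_Ioi).2 (Filter.Eventually.of_forall hnn))
      (Filter.Eventually.of_forall hsub)
  have h4 : ∫ l in Set.Ioc (1:ℝ) 2, (2:ℝ) ^ (-(4 - α)) * (1 / 8)
      ≤ ∫ l in Set.Ioc (1:ℝ) 2, l ^ (-(4 - α)) * Jf l 1 0 := by
    refine setIntegral_mono_on (integrableOn_const (by simp)) (hI.mono_set hsub)
      measurableSet_Ioc fun l hl => ?_
    refine mul_le_mul ?_ (J_ge hl.1.le) (by norm_num) (hnn l (hsub hl) |> fun _ => ?_)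
    · exact Real.rpow_le_rpow_of_nonpos (by linarith [hl.1]) hl.2 (by linarith)
    · exact Real.rpow_nonneg (le_of_lt (hsub hl)) _
  have h5 : (0:ℝ) < ∫ l in Set.Ioc (1:ℝ) 2, (2:ℝ) ^ (-(4 - α)) * (1 / 8) := by
    simp [Measure.real]
    positivity
  linarith

lemma J_symm (l u v : ℝ) : Jf l u v = Jf l v u := by
  unfold Jf
  congr 1; funext t; ring

lemma J_int_pos {α : ℝ} (h1 : 1 < α) (h2 : α < 2) {r : ℝ} (hr : 0 < r) (v : ℝ) :
    IntegrableOn (fun l => l ^ (-(4 - α)) * Jf l (v + r) v) (Set.Ioi 0) ∧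
    ∫ l in Set.Ioi 0, l ^ (-(4 - α)) * Jf l (v + r) v = Cc α * r ^ α := by
  have e : Set.EqOn (fun l => l ^ (-(4 - α)) * Jf l (v + r) v)
      (fun l => (r ^ 3 * r ^ (-(4 - α))) *
        (fun m => m ^ (-(4 - α)) * Jf m 1 0) (r⁻¹ * l)) (Set.Ioi 0) := by
    intro l hl
    have hl0 : 0 < l := hl
    simp only
    rw [J_scale hr, Real.mul_rpow (inv_nonneg.2 hr.le) hl0.le, Real.inv_rpow hr.le]
    have : r ^ (-(4 - α)) ≠ 0 := (Real.rpow_pos_of_pos hr _).ne'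
    field_simp
  have hri : 0 < r⁻¹ := inv_pos.2 hr
  constructor
  · refine IntegrableOn.congr_fun ?_ e.symm measurableSet_Ioi
    refine Integrable.const_mul ?_ _
    have := (integrableOn_Ioi_comp_mul_left_iff (fun m => m ^ (-(4 - α)) * Jf m 1 0) 0 hri).2
    rw [mul_zero] at this
    exact this (J_int_one h1 h2)
  · rw [setIntegral_congr_fun measurableSet_Ioi e, integral_const_mul,
      integral_comp_mul_left_Ioi (fun m => m ^ (-(4 - α)) * Jf m 1 0) _ hri, mul_zero, inv_inv, smul_eq_mul]
    change _ * (r * Cc α) = _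
    have : r ^ α = r ^ (3:ℝ) * r ^ (-(4 - α)) * r ^ (1:ℝ) := by
      rw [← Real.rpow_add hr, ← Real.rpow_add hr]; ring_nf
    rw [this, Real.rpow_one]
    norm_cast
    ring

lemma J_int {α : ℝ} (h1 : 1 < α) (h2 : α < 2) (u v : ℝ) :
    IntegrableOn (fun l => l ^ (-(4 - α)) * Jf l u v) (Set.Ioi 0) ∧
    ∫ l in Set.Ioi 0, l ^ (-(4 - α)) * Jf l u v = Cc α * |u - v| ^ α := by
  rcases lt_trichotomy u v with h | h | h
  · have := J_int_pos h1 h2 (sub_pos.2 h) u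
    rw [abs_of_neg (sub_neg.2 h)]
    simp_rw [J_symm _ u v]
    simpa using this
  · subst h
    have : ∀ l, Jf l u u = 0 := fun l => by simp [Jf]
    simp [this, Real.zero_rpow (by linarith : α ≠ 0)]
  · have := J_int_pos h1 h2 (sub_pos.2 h) v
    rw [abs_of_pos (sub_pos.2 h)]
    simpa using this

/-- feature map -/
noncomputable def Ph (α : ℝ) (θ : ℝ × ℝ) (u : ℝ) : ℝ := θ.1 ^ (-(4 - α) / 2) * cl θ.1 θ.2 u

lemma rpow_half_sq {l : ℝ} (hl : 0 < l) (a : ℝ) : (l ^ (a / 2)) ^ 2 = l ^ a := by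
  rw [← Real.rpow_natCast, ← Real.rpow_mul hl.le]
  congr 1
  push_cast; ring

lemma Ph_meas (α : ℝ) : Measurable (Function.uncurry (Ph α)) := by
  unfold Ph cl Function.uncurry
  fun_prop

lemma Ph_rep {α : ℝ} (h1 : 1 < α) (h2 : α < 2) (u v : ℝ) :
    Integrable (fun θ => (Ph α θ u - Ph α θ v) ^ 2)
      ((volume.restrict (Set.Ioi (0:ℝ))).prod volume) ∧
    ∫ θ, (Ph α θ u - Ph α θ v) ^ 2 ∂((volume.restrict (Set.Ioi (0:ℝ))).prod volume)
      = Cc α * |u - v| ^ α := by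
  have hm : ∀ u, Measurable fun θ => Ph α θ u := fun u =>
    (Ph_meas α).comp measurable_prodMk_right
  have e : ∀ l ∈ Set.Ioi (0:ℝ), ∀ t, (Ph α (l, t) u - Ph α (l, t) v) ^ 2
      = l ^ (-(4 - α)) * (cl l t u - cl l t v) ^ 2 := by
    intro l hl t
    rw [← rpow_half_sq hl]
    unfold Ph
    ring
  have e2 : Set.EqOn (fun l => ∫ t, (Ph α (l, t) u - Ph α (l, t) v) ^ 2)
      (fun l => l ^ (-(4 - α)) * Jf l u v) (Set.Ioi 0) := by
    intro l hl
    simp only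
    simp_rw [e l hl]
    rw [integral_const_mul, Jf]
  have hI : Integrable (fun θ => (Ph α θ u - Ph α θ v) ^ 2)
      ((volume.restrict (Set.Ioi (0:ℝ))).prod volume) := by
    have hmm : Measurable fun θ => (Ph α θ u - Ph α θ v) ^ 2 := ((hm u).sub (hm v)).pow_const 2
    rw [integrable_prod_iff hmm.aestronglyMeasurable]
    constructor
    · refine (ae_restrict_iff' measurableSet_Ioi).2 (Filter.Eventually.of_forall fun l hl => ?_)
      simp_rw [e l hl]
      exact (cl_diff_int hl u v).const_mul _
    · simp only [Real.norm_eq_abs, abs_pow, sq_abs]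
      exact (J_int h1 h2 u v).1.congr_fun e2.symm measurableSet_Ioi
  refine ⟨hI, ?_⟩
  rw [integral_prod _ hI, setIntegral_congr_fun measurableSet_Ioi e2]
  exact (J_int h1 h2 u v).2

lemma cl_box_upper (n : ℕ) {l t : ℝ} (hl : 0 < l) (ht : t ∈ box n) :
    ∫ y in box n, cl l (t - l) y ≤ l * (n / 2 - t) + l ^ 2 := by
  have hc : Continuous fun y => cl l (t - l) y := by unfold cl; fun_prop
  calc ∫ y in box n, cl l (t - l) y
      ≤ ∫ y in box n, (Set.Icc (t - l) (n / 2)).indicator (fun _ => l) y := by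
        refine setIntegral_mono_on (integrable_box_cont n hc) (ind_int _ _ _).integrableOn
          (meas_box n) fun y hy => ?_
        simp only [Set.indicator, Set.mem_Icc]
        split_ifs with h
        · exact cl_le hl.le _ _
        · have : y < t - l := by
            by_contra h'
            exact h ⟨not_lt.1 h', hy.2⟩
          unfold cl
          rw [max_eq_left ((min_le_right _ _).trans (by linarith))]
    _ ≤ ∫ y, (Set.Icc (t - l) (n / 2)).indicator (fun _ => l) y :=
        setIntegral_le_integral (ind_int _ _ _) (Filter.Eventually.of_forall fun y =>
          Set.indicator_nonneg (fun _ _ => hl.le) y)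
    _ = _ := by
        rw [integral_indicator measurableSet_Icc]
        have : 0 ≤ (n:ℝ) / 2 - (t - l) := by linarith [ht.2]
        simp [Measure.real]
        rw [ENNReal.toReal_ofReal this]
        ring

lemma cl_box_lower (n : ℕ) {l t : ℝ} (hl : 0 < l) (ht : t ∈ box n) :
    l * (n / 2 - t) - l ^ 2 ≤ ∫ y in box n, cl l t y := by
  have hc : Continuous fun y => cl l t y := by unfold cl; fun_prop
  calc l * (n / 2 - t) - l ^ 2 ≤ ∫ y in box n, (Set.Icc (t + l) (n / 2)).indicator (fun _ => l) y := by
        rw [setIntegral_indicator measurableSet_Icc]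
        have : box n ∩ Set.Icc (t + l) (n / 2) = Set.Icc (t + l) (n / 2) := by
          refine Set.inter_eq_right.2 fun y hy => ⟨?_, hy.2⟩
          linarith [ht.1, hy.1]
        rw [this]
        simp [Measure.real]
        rw [ENNReal.toReal_ofReal']
        nlinarith [le_max_left ((n:ℝ) / 2 - (t + l)) 0]
    _ ≤ _ := by
        refine setIntegral_mono_on (ind_int _ _ _).integrableOn (integrable_box_cont n hc)
          (meas_box n) fun y hy => ?_
        simp only [Set.indicator, Set.mem_Icc]
        split_ifs with h
        · unfold cl
          rw [min_eq_left (by linarith)]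
          exact le_max_right _ _
        · exact cl_nonneg _ _ _

noncomputable def Gg (n : ℕ) (x : Fin n → ℝ) (l t : ℝ) : ℝ :=
  ∑ i, cl l t (x i) - ∫ y in box n, cl l t y

lemma D_le_G (n : ℕ) (x : Fin n → ℝ) {l t : ℝ} (hl : 1 / 2 < l) (hl1 : l ≤ 1) (ht : t ∈ box n) :
    Dd n x t ^ 2 ≤ 3 + 12 * (Gg n x l (t + -l) ^ 2 + Gg n x l t ^ 2) := by
  have hl0 : 0 < l := by linarith
  have a1 : l * Dd n x t ≤ Gg n x l (t + -l) + l ^ 2 := by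
    have h1 := cl_box_upper n hl0 ht
    have h2 : l * ∑ i, (if t < x i then (1:ℝ) else 0) ≤ ∑ i, cl l (t - l) (x i) := by
      rw [Finset.mul_sum]
      refine Finset.sum_le_sum fun i _ => ?_
      split_ifs with h
      · unfold cl
        rw [min_eq_left (by linarith)]
        simp
      · simpa using cl_nonneg _ _ _
    unfold Dd Gg
    rw [← sub_eq_add_neg, mul_sub]
    linarith
  have a2 : Gg n x l t - l ^ 2 ≤ l * Dd n x t := by
    have h1 := cl_box_lower n hl0 ht
    have h2 : ∑ i, cl l t (x i) ≤ l * ∑ i, (if t < x i then (1:ℝ) else 0) := by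
      rw [Finset.mul_sum]
      refine Finset.sum_le_sum fun i _ => ?_
      split_ifs with h
      · simpa using cl_le hl0.le _ _
      · unfold cl
        rw [max_eq_left ((min_le_right _ _).trans (by linarith))]
        simp
    unfold Dd Gg
    rw [mul_sub]
    linarith
  set d := Dd n x t
  set A := Gg n x l (t + -l)
  set B := Gg n x l t
  have hld : (l * d) ^ 2 ≤ 2 * l ^ 4 + 2 * (A ^ 2 + B ^ 2) := by
    rcases le_total 0 (l * d) with h | h
    · have : (l * d) ^ 2 ≤ (A + l ^ 2) ^ 2 := pow_le_pow_left₀ h a1 2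
      nlinarith [sq_nonneg (A - l ^ 2), sq_nonneg B]
    · have : (-(l * d)) ^ 2 ≤ (l ^ 2 - B) ^ 2 := pow_le_pow_left₀ (by linarith) (by linarith) 2
      nlinarith [sq_nonneg (B + l ^ 2), sq_nonneg A]
  have h4 : l ^ 4 ≤ l ^ 2 := by
    have : l ^ 2 ≤ 1 := by nlinarith
    nlinarith [sq_nonneg l]
  have hq : 1 / 4 ≤ l ^ 2 := by nlinarith
  have hl2 : 0 < l ^ 2 := by positivity
  have : l ^ 2 * d ^ 2 ≤ l ^ 2 * (3 + 12 * (A ^ 2 + B ^ 2)) := by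
    nlinarith [sq_nonneg A, sq_nonneg B]
  exact le_of_mul_le_mul_left this hl2

lemma G_meas (n : ℕ) (x : Fin n → ℝ) (l : ℝ) : Measurable (fun t => Gg n x l t) := by
  unfold Gg
  refine Measurable.sub (Finset.measurable_sum _ fun i _ => ?_) ?_
  · unfold cl; fun_prop
  · have : Continuous (fun p : ℝ × ℝ => cl l p.1 p.2) := by
      unfold cl; fun_prop
    exact (this.stronglyMeasurable.integral_prod_right (ν := volume.restrict (box n))).measurable

lemma D_le_G_int (n : ℕ) (x : Fin n → ℝ) {l : ℝ} (hl : 1 / 2 < l) (hl1 : l ≤ 1)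
    (hI : Integrable (fun t => Gg n x l t ^ 2)) :
    ∫ t in box n, Dd n x t ^ 2 ≤ 3 * n + 24 * ∫ t, Gg n x l t ^ 2 := by
  have hI' : Integrable (fun t => Gg n x l (t + -l) ^ 2) := hI.comp_add_right (-l)
  have hs : Integrable (fun t => 12 * (Gg n x l (t + -l) ^ 2 + Gg n x l t ^ 2)) :=
    (hI'.add hI).const_mul 12
  have hs3 : IntegrableOn (fun t => 3 + 12 * (Gg n x l (t + -l) ^ 2 + Gg n x l t ^ 2)) (box n) :=
    (integrable_const (3:ℝ)).add hs.integrableOn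
  calc ∫ t in box n, Dd n x t ^ 2
      ≤ ∫ t in box n, (3 + 12 * (Gg n x l (t + -l) ^ 2 + Gg n x l t ^ 2)) :=
        setIntegral_mono_on (Dd_sq_int n x) hs3 (meas_box n) fun t ht => D_le_G n x hl hl1 ht
    _ = n * 3 + ∫ t in box n, 12 * (Gg n x l (t + -l) ^ 2 + Gg n x l t ^ 2) := by
        rw [integral_add (integrable_const _) hs.integrableOn, box_const]
    _ ≤ n * 3 + ∫ t, 12 * (Gg n x l (t + -l) ^ 2 + Gg n x l t ^ 2) := by
        refine add_le_add_right ?_ _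
        exact setIntegral_le_integral hs (Filter.Eventually.of_forall fun t => by
          simp only [Pi.zero_apply]; positivity)
    _ = _ := by
        rw [integral_const_mul, integral_add hI' hI,
          integral_add_right_eq_self (fun t => Gg n x l t ^ 2)]
        ring

lemma Hok_smul (n : ℕ) (c : ℝ) (g : ℝ → ℝ) (x : Fin n → ℝ) :
    Hok n (fun t => c * g t) x = c * Hok n g x := by
  unfold Hok
  simp only [integral_const_mul, ← Finset.mul_sum]
  ring

lemma D_bound_gt {α : ℝ} (h1 : 1 < α) (h2 : α < 2) (n : ℕ) (x : Fin n → ℝ) :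
    ∫ t in box n, Dd n x t ^ 2 ≤ 3 * n + 48 * (Cc α * Hok n (rieszKernel (-α)) x) := by
  obtain ⟨hI, hH⟩ := H_rep ((volume.restrict (Set.Ioi (0:ℝ))).prod volume) (Ph α) (Ph_meas α)
    (fun θ => |θ.1 ^ (-(4 - α) / 2)| * |θ.1|)
    (fun θ u => by
      unfold Ph
      rw [abs_mul]
      refine mul_le_mul_of_nonneg_left ?_ (abs_nonneg _)
      unfold cl
      rw [abs_of_nonneg (le_max_left _ _)]
      exact max_le (abs_nonneg _) ((min_le_left _ _).trans (le_abs_self _)))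
    (fun r => Cc α * |r| ^ α)
    (continuous_const.mul (continuous_abs.rpow_const fun x => Or.inr (by linarith)))
    (fun u v => (Ph_rep h1 h2 u v).1) (fun u v => (Ph_rep h1 h2 u v).2) n x
  have e : (fun t => -(Cc α * |t| ^ α)) = fun t => Cc α * rieszKernel (-α) t := by
    funext t; simp [rieszKernel]
  rw [e, Hok_smul] at hH
  rw [hH]
  have e2 : ∀ l t, ∑ i, Ph α (l, t) (x i) - ∫ y in box n, Ph α (l, t) y
      = l ^ (-(4 - α) / 2) * Gg n x l t := by
    intro l t
    unfold Ph Gg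
    simp only
    rw [integral_const_mul, ← Finset.mul_sum]
    ring
  rw [integral_prod _ hI]
  have hae := hI.prod_right_ae
  have hIl := hI.integral_prod_left
  simp_rw [e2] at hae hIl ⊢
  have hsub : Set.Ioc (1 / 2 : ℝ) 1 ⊆ Set.Ioi 0 := fun l hl => by
    have := hl.1
    simp only [Set.mem_Ioi]; linarith
  have h3 : ∫ l in Set.Ioc (1 / 2 : ℝ) 1, ∫ t, (l ^ (-(4 - α) / 2) * Gg n x l t) ^ 2
      ≤ ∫ l in Set.Ioi (0 : ℝ), ∫ t, (l ^ (-(4 - α) / 2) * Gg n x l t) ^ 2 :=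
    setIntegral_mono_set hIl (Filter.Eventually.of_forall fun l =>
      integral_nonneg fun t => sq_nonneg _) (Filter.Eventually.of_forall hsub)
  set d := ∫ t in box n, Dd n x t ^ 2
  have h4 : ∫ l in Set.Ioc (1 / 2 : ℝ) 1, (d - 3 * n) / 24
      ≤ ∫ l in Set.Ioc (1 / 2 : ℝ) 1, ∫ t, (l ^ (-(4 - α) / 2) * Gg n x l t) ^ 2 := by
    refine setIntegral_mono_on_ae (integrableOn_const (by simp)) (hIl.mono_measure
      (Measure.restrict_mono hsub le_rfl)) measurableSet_Ioc ?_
    rw [ae_restrict_iff' measurableSet_Ioi] at hae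
    filter_upwards [hae] with l hl hl2
    have hlp : 0 < l := hsub hl2
    have hI1 := hl (hsub hl2)
    have hlpos : 0 < l ^ (-(4 - α)) := Real.rpow_pos_of_pos hlp _
    have hge : 1 ≤ l ^ (-(4 - α)) :=
      Real.one_le_rpow_of_pos_of_le_one_of_nonpos hlp hl2.2 (by linarith)
    simp_rw [mul_pow, rpow_half_sq hlp] at hI1 ⊢
    have hI2 : Integrable (fun t => Gg n x l t ^ 2) := by
      have := hI1.const_mul (l ^ (-(4 - α)))⁻¹
      simp only [← mul_assoc, inv_mul_cancel₀ hlpos.ne', one_mul] at this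
      exact this
    have h5 := D_le_G_int n x hl2.1 hl2.2 hI2
    rw [integral_const_mul]
    have h6 : 0 ≤ ∫ t, Gg n x l t ^ 2 := integral_nonneg fun t => sq_nonneg _
    nlinarith
  have h7 : ∫ l in Set.Ioc (1 / 2 : ℝ) 1, (d - 3 * n) / 24 = (1 / 2) * ((d - 3 * n) / 24) := by
    simp [Measure.real]
    norm_num
  linarith

lemma D_bound (s : ℝ) (hs : -2 < s) (hs' : s ≤ -1) : ∃ C : ℝ, 0 < C ∧ ∀ n (x : Fin n → ℝ),
    ∫ t in box n, Dd n x t ^ 2 ≤ 3 * n + C * Hok n (rieszKernel s) x := by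
  rcases hs'.eq_or_lt with h | h
  · subst h
    refine ⟨1, one_pos, fun n x => ?_⟩
    have := D_bound_one n x
    have : (0:ℝ) ≤ n := Nat.cast_nonneg n
    linarith
  · refine ⟨48 * Cc (-s), by have := Cc_pos (α := -s) (by linarith) (by linarith); positivity,
      fun n x => ?_⟩
    have := D_bound_gt (α := -s) (by linarith) (by linarith) n x
    rw [neg_neg] at this
    linarith

lemma card_near (n : ℕ) (t R : ℝ) (hR : 0 ≤ R) :
    ((Finset.univ.filter fun j : Fin n => |t - latticeY n j| ≤ R).card : ℝ) ≤ 2 * R + 1 := by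
  set a : ℝ := t - 1 + ((n:ℝ) + 1) / 2 with ha
  have h1 : (Finset.univ.filter fun j : Fin n => |t - latticeY n j| ≤ R).card
      ≤ (Finset.Icc ⌈a - R⌉ ⌊a + R⌋).card := by
    refine Finset.card_le_card_of_injOn (fun j => ((j : ℕ) : ℤ)) ?_ ?_
    · intro j hj
      simp only [Finset.coe_filter, Finset.mem_univ, true_and, Set.mem_ofPred_eq, latticeY,
        abs_le] at hj
      simp only [Finset.coe_Icc, Set.mem_Icc, Int.ceil_le, Int.le_floor]
      push_cast
      constructor <;> linarith [hj.1, hj.2]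
    · intro i _ j _ h
      simp only [Nat.cast_inj] at h
      exact Fin.ext h
  rw [Int.card_Icc] at h1
  have h2 : ((⌊a + R⌋ + 1 - ⌈a - R⌉).toNat : ℝ) ≤ 2 * R + 1 := by
    have : (((⌊a + R⌋ + 1 - ⌈a - R⌉).toNat : ℤ) : ℝ) ≤ 2 * R + 1 := by
      rw [Int.toNat_eq_max]
      push_cast
      refine max_le ?_ (by linarith)
      linarith [Int.floor_le (a + R), Int.le_ceil (a - R)]
    exact_mod_cast this
  exact (Nat.cast_le.2 h1).trans h2

lemma near_D (n : ℕ) (x : Fin n → ℝ) (t : ℝ) (j : Fin n)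
    (ht : t ∈ Set.Ico (min (latticeY n j) (x (Tuple.sort x j)))
      (max (latticeY n j) (x (Tuple.sort x j)))) :
    |t - latticeY n j| ≤ |Dd n x t| := by
  have hmono : Monotone (x ∘ Tuple.sort x) := Tuple.monotone_sort x
  have hj : ((j : ℕ) : ℝ) + 1 ≤ n := by exact_mod_cast j.2
  have hs : ∑ i, (if t < x i then (1:ℝ) else 0)
      = ∑ i, (if t < x (Tuple.sort x i) then (1:ℝ) else 0) :=
    (Equiv.sum_comp (Tuple.sort x) (fun i => if t < x i then (1:ℝ) else 0)).symm
  unfold Dd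
  rw [hs]
  rcases le_total (latticeY n j) (x (Tuple.sort x j)) with h | h
  · rw [min_eq_left h, max_eq_right h] at ht
    have h1 : ((n:ℝ) - j) ≤ ∑ i, (if t < x (Tuple.sort x i) then (1:ℝ) else 0) := by
      calc ((n:ℝ) - j) = ∑ i : Fin n, (if j ≤ i then (1:ℝ) else 0) := by
            rw [Finset.sum_boole, Finset.filter_le_eq_Ici, Fin.card_Ici, Nat.cast_sub j.2.le]
        _ ≤ _ := by
            refine Finset.sum_le_sum fun i _ => ?_
            split_ifs with a b
            · exact le_rfl
            · exact absurd (lt_of_lt_of_le ht.2 (hmono a)) b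
            · norm_num
            · exact le_rfl
    rw [abs_of_nonneg (by linarith [ht.1])]
    refine le_trans ?_ (le_abs_self _)
    unfold latticeY
    linarith
  · rw [min_eq_right h, max_eq_left h] at ht
    have h1 : ∑ i, (if t < x (Tuple.sort x i) then (1:ℝ) else 0) ≤ (n:ℝ) - j - 1 := by
      calc _ ≤ ∑ i : Fin n, (if j < i then (1:ℝ) else 0) := by
            refine Finset.sum_le_sum fun i _ => ?_
            split_ifs with a b
            · exact le_rfl
            · have := hmono (not_lt.1 b)
              simp only [Function.comp] at this
              linarith [ht.1]
            · norm_num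
            · exact le_rfl
        _ = _ := by
            rw [Finset.sum_boole, Finset.filter_lt_eq_Ioi, Fin.card_Ioi]
            have : n - 1 - (j:ℕ) = n - (j + 1) := by omega
            rw [this, Nat.cast_sub j.2]
            push_cast; ring
    rw [abs_of_nonpos (by linarith [ht.2])]
    refine le_trans ?_ (neg_le_abs _)
    unfold latticeY
    linarith

lemma int_abs_between (y z : ℝ) :
    ∫ t in Set.Ico (min y z) (max y z), |t - y| = (z - y) ^ 2 / 2 := by
  rw [integral_Ico_eq_integral_Ioo, ← integral_Ioc_eq_integral_Ioo]
  rcases le_total y z with h | h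
  · rw [min_eq_left h, max_eq_right h]
    rw [setIntegral_congr_fun (g := fun t => t - y) measurableSet_Ioc
      (fun t ht => abs_of_nonneg (by linarith [ht.1])), ← intervalIntegral.integral_of_le h]
    rw [intervalIntegral.integral_sub (by simp) (by simp)]
    simp
    ring
  · rw [min_eq_right h, max_eq_left h]
    rw [setIntegral_congr_fun (g := fun t => y - t) measurableSet_Ioc
      (fun t ht => by
        simp only
        rw [abs_of_nonpos (by linarith [ht.2])]; ring), ← intervalIntegral.integral_of_le h,
      intervalIntegral.integral_sub (by simp) (by simp)]
    simp
    ring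

lemma T_bound (n : ℕ) (x : Fin n → ℝ) (hx : ∀ i, x i ∈ box n) :
    ∑ j : Fin n, (x (Tuple.sort x j) - latticeY n j) ^ 2
      ≤ 6 * (∫ t in box n, Dd n x t ^ 2) + 2 * n := by
  set S : Fin n → Set ℝ := fun j => Set.Ico (min (latticeY n j) (x (Tuple.sort x j)))
      (max (latticeY n j) (x (Tuple.sort x j))) with hS
  have hmS : ∀ j, MeasurableSet (S j) := fun j => measurableSet_Ico
  have hsub : ∀ j, S j ⊆ box n := by
    intro j t ht
    have hy : latticeY n j ∈ box n := by
      have hj : ((j : ℕ) : ℝ) + 1 ≤ n := by exact_mod_cast j.2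
      have hj0 : (0:ℝ) ≤ ((j : ℕ) : ℝ) := Nat.cast_nonneg _
      unfold latticeY box
      constructor <;> linarith
    have hz := hx (Tuple.sort x j)
    exact ⟨(le_min hy.1 hz.1).trans ht.1, ht.2.le.trans (max_le hy.2 hz.2)⟩
  have hcont : ∀ j, Continuous fun t => |t - latticeY n j| := fun j => by fun_prop
  have hterm : ∀ j, (x (Tuple.sort x j) - latticeY n j) ^ 2
      = 2 * ∫ t in box n, (S j).indicator (fun t => |t - latticeY n j|) t := by
    intro j
    rw [setIntegral_indicator (hmS j), Set.inter_eq_right.2 (hsub j), int_abs_between]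
    ring
  have hint : ∀ j, Integrable ((S j).indicator (fun t => |t - latticeY n j|))
      (volume.restrict (box n)) := fun j => (integrable_box_cont n (hcont j)).indicator (hmS j)
  simp_rw [hterm]
  rw [← Finset.mul_sum, ← integral_finsetSum _ fun j _ => hint j]
  have hs3 : IntegrableOn (fun t => 3 * Dd n x t ^ 2 + 1) (box n) :=
    ((Dd_sq_int n x).const_mul 3).add (integrable_const (1:ℝ))
  have key : ∫ t in box n, ∑ j, (S j).indicator (fun t => |t - latticeY n j|) t
      ≤ ∫ t in box n, (3 * Dd n x t ^ 2 + 1) := by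
    refine setIntegral_mono_on (integrable_finsetSum _ fun j _ => hint j) hs3 (meas_box n)
      fun t _ => ?_
    set R := |Dd n x t| with hR
    have hR0 : 0 ≤ R := abs_nonneg _
    calc ∑ j, (S j).indicator (fun t => |t - latticeY n j|) t
        ≤ ∑ j, (if |t - latticeY n j| ≤ R then R else 0) := by
          refine Finset.sum_le_sum fun j _ => ?_
          by_cases h : t ∈ S j
          · rw [Set.indicator_of_mem h, if_pos (near_D n x t j h)]
            exact near_D n x t j h
          · rw [Set.indicator_of_notMem h]
            split_ifs
            · exact hR0
            · exact le_rfl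
      _ = (Finset.univ.filter fun j : Fin n => |t - latticeY n j| ≤ R).card * R := by
          rw [← Finset.sum_filter, Finset.sum_const, nsmul_eq_mul]
      _ ≤ (2 * R + 1) * R := by
          gcongr
          exact card_near n t R hR0
      _ ≤ 3 * R ^ 2 + 1 := by nlinarith [sq_nonneg (R - 1)]
      _ = _ := by rw [hR, sq_abs]
  rw [integral_add ((Dd_sq_int n x).const_mul 3) (integrable_const _), integral_const_mul,
    box_const] at key
  linarith

lemma Hok_cont (n : ℕ) {g : ℝ → ℝ} (hg : Continuous g) : Continuous (Hok n g) := by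
  unfold Hok
  refine Continuous.add (Continuous.sub ?_ ?_) continuous_const
  · fun_prop
  · refine continuous_finsetSum _ fun i _ => ?_
    have : Continuous fun u : ℝ => ∫ y in box n, g (u - y) :=
      continuous_parametric_integral_of_continuous (f := fun u y => g (u - y))
        (by unfold Function.uncurry; fun_prop) isCompact_Icc
    exact this.comp (continuous_apply i)

lemma boxn_compact (n : ℕ) : IsCompact (Set.univ.pi (fun _ : Fin n => box n)) :=
  isCompact_univ_pi fun _ => isCompact_Icc

lemma boxn_int (n : ℕ) {f : (Fin n → ℝ) → ℝ} (hf : Continuous f) :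
    IntegrableOn f (Set.univ.pi (fun _ : Fin n => box n)) :=
  hf.continuousOn.integrableOn_compact (boxn_compact n)

/-- unit cells -/
def cell (n : ℕ) (j : Fin n) : Set ℝ := Set.Ioc (-(n:ℝ) / 2 + (j : ℕ)) (-(n:ℝ) / 2 + ((j : ℕ) + 1 : ℕ))

lemma cell_vol (n : ℕ) (j : Fin n) : volume (cell n j) = 1 := by
  simp [cell]

instance (n : ℕ) (j : Fin n) : IsProbabilityMeasure (volume.restrict (cell n j)) :=
  ⟨by simp [cell_vol]⟩

lemma cell_sub (n : ℕ) (j : Fin n) : cell n j ⊆ box n := by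
  intro t ht
  have hj : ((j : ℕ) : ℝ) + 1 ≤ n := by exact_mod_cast j.2
  have hj0 : (0:ℝ) ≤ ((j : ℕ) : ℝ) := Nat.cast_nonneg _
  obtain ⟨h1, h2⟩ := ht
  push_cast at h2
  constructor <;> linarith

lemma cell_disj (n : ℕ) {i j : Fin n} {t : ℝ} (hi : t ∈ cell n i) (hj : t ∈ cell n j) : i = j := by
  obtain ⟨h1, h2⟩ := hi
  obtain ⟨h3, h4⟩ := hj
  have a : ((i:ℕ):ℝ) < (((j:ℕ) + 1 : ℕ) : ℝ) := by linarith
  have b : ((j:ℕ):ℝ) < (((i:ℕ) + 1 : ℕ) : ℝ) := by linarith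
  have a' := Nat.cast_lt.1 a
  have b' := Nat.cast_lt.1 b
  exact Fin.ext (by omega)

lemma box_cells (n : ℕ) {f : ℝ → ℝ} (hf : Continuous f) :
    ∫ t in box n, f t = ∑ k : Fin n, ∫ t in cell n k, f t := by
  have h := intervalIntegral.sum_integral_adjacent_intervals (f := f) (μ := volume)
    (a := fun k : ℕ => -(n:ℝ) / 2 + (k:ℝ)) (n := n) (fun k _ => hf.intervalIntegrable _ _)
  rw [Finset.sum_range] at h
  have h1 : ∀ k : Fin n, ∫ t in cell n k, f t
      = ∫ t in (-(n:ℝ) / 2 + ((k:ℕ):ℝ))..(-(n:ℝ) / 2 + (((k:ℕ) + 1 : ℕ) : ℝ)), f t := by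
    intro k
    rw [intervalIntegral.integral_of_le (by push_cast; linarith)]
    rfl
  simp_rw [h1]
  rw [h, intervalIntegral.integral_of_le (by simp), box, integral_Icc_eq_integral_Ioc]
  congr 2
  norm_num
  ring_nf

lemma cell_int (n : ℕ) (k : Fin n) {f : ℝ → ℝ} (hf : Continuous f) :
    Integrable f (volume.restrict (cell n k)) :=
  (integrable_box_cont n hf).mono_measure (Measure.restrict_mono (cell_sub n k) le_rfl)

section cells
variable (n : ℕ) (σ : Equiv.Perm (Fin n))

lemma cells_sub : Set.univ.pi (fun i => cell n (σ i)) ⊆ Set.univ.pi (fun _ : Fin n => box n) :=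
  Set.pi_mono fun i _ => cell_sub n (σ i)

lemma cells_measure : (volume.restrict (Set.univ.pi (fun i => cell n (σ i))) : Measure (Fin n → ℝ))
    = Measure.pi (fun i => volume.restrict (cell n (σ i))) := by
  rw [volume_pi, Measure.restrict_pi_pi]

lemma cells_eval {f : ℝ → ℝ} (hf : Continuous f) (i : Fin n) :
    ∫ x in Set.univ.pi (fun i => cell n (σ i)), f (x i) = ∫ t in cell n (σ i), f t := by
  rw [cells_measure]
  have := measurePreserving_eval (fun i => (volume.restrict (cell n (σ i)) : Measure ℝ)) i
  rw [← this.map_eq, integral_map this.measurable.aemeasurable hf.aestronglyMeasurable]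

lemma cells_eval2 {f : ℝ × ℝ → ℝ} (hf : Continuous f) {i j : Fin n} (hij : i ≠ j) :
    ∫ x in Set.univ.pi (fun i => cell n (σ i)), f (x i, x j)
      = ∫ u in cell n (σ i), ∫ v in cell n (σ j), f (u, v) := by
  rw [cells_measure]
  set P := fun i => (volume.restrict (cell n (σ i)) : Measure ℝ) with hP
  have hind := ProbabilityTheory.iIndepFun_pi (μ := P) (X := fun _ => (id : ℝ → ℝ))
    (fun i => aemeasurable_id)
  have h2 := hind.indepFun hij
  have hi := measurePreserving_eval P i
  have hj := measurePreserving_eval P j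
  replace h2 := (ProbabilityTheory.indepFun_iff_map_prod_eq_prod_map_map
    (f := fun ω : Fin n → ℝ => id (ω i)) (g := fun ω : Fin n → ℝ => id (ω j))
    hi.measurable.aemeasurable hj.measurable.aemeasurable).1 h2
  have e1 : Measure.map (fun ω : Fin n → ℝ => id (ω i)) (Measure.pi P) = P i := hi.map_eq
  have e2 : Measure.map (fun ω : Fin n → ℝ => id (ω j)) (Measure.pi P) = P j := hj.map_eq
  rw [e1, e2] at h2
  have hI : Integrable f ((P i).prod (P j)) := by
    refine (integrable_box_cont2 n hf).mono_measure ?_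
    exact Measure.prod_mono (Measure.restrict_mono (cell_sub n _) le_rfl)
      (Measure.restrict_mono (cell_sub n _) le_rfl)
  rw [← integral_prod f hI, ← h2, integral_map (by fun_prop) hf.aestronglyMeasurable]
  rfl

lemma cells_int {f : (Fin n → ℝ) → ℝ} (hf : Continuous f) :
    Integrable f (volume.restrict (Set.univ.pi (fun i => cell n (σ i)))) :=
  (boxn_int n hf).mono_set (cells_sub n σ)

lemma cells_H {s : ℝ} (hs' : s ≤ -1) :
    ∫ x in Set.univ.pi (fun i => cell n (σ i)), Hok n (rieszKernel s) x ≤ n / 2 := by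
  set g := rieszKernel s with hgdef
  have hg : Continuous g := riesz_cont hs'
  set a : Fin n → Fin n → ℝ := fun k l => ∫ u in cell n k, ∫ v in cell n l, g (u - v) with ha
  have hc1 : Continuous fun u : ℝ => ∫ y in box n, g (u - y) :=
    continuous_parametric_integral_of_continuous (f := fun u y => g (u - y))
        (by unfold Function.uncurry; fun_prop) isCompact_Icc
  have hg0 : g 0 = 0 := by
    simp only [hgdef, rieszKernel, abs_zero]
    rw [Real.zero_rpow (by linarith), neg_zero]
  have hrow : ∀ k, ∫ u in cell n k, ∫ v in box n, g (u - v) = ∑ l, a k l := by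
    intro k
    have : ∀ u, ∫ v in box n, g (u - v) = ∑ l, ∫ v in cell n l, g (u - v) := fun u =>
      box_cells n (by fun_prop)
    simp_rw [this]
    refine integral_finsetSum _ fun l _ => ?_
    have hI : Integrable (fun p : ℝ × ℝ => g (p.1 - p.2))
        ((volume.restrict (cell n k)).prod (volume.restrict (cell n l))) := by
      refine (integrable_box_cont2 n (by fun_prop)).mono_measure ?_
      exact Measure.prod_mono (Measure.restrict_mono (cell_sub n _) le_rfl)
        (Measure.restrict_mono (cell_sub n _) le_rfl)
    exact hI.integral_prod_left
  have htot : ∫ u in box n, (∫ v in box n, g (u - v)) = ∑ k, ∑ l, a k l := by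
    rw [box_cells n hc1]
    exact Finset.sum_congr rfl fun k _ => hrow k
  have hI1 : ∀ i j : Fin n, Integrable (fun x : Fin n → ℝ => g (x i - x j))
      (volume.restrict (Set.univ.pi (fun i => cell n (σ i)))) := fun i j =>
    cells_int n σ (by fun_prop)
  have hI2 : ∀ i : Fin n, Integrable (fun x : Fin n → ℝ => ∫ y in box n, g (x i - y))
      (volume.restrict (Set.univ.pi (fun i => cell n (σ i)))) := fun i =>
    cells_int n σ (hc1.comp (continuous_apply i))
  have hpair : ∀ i j : Fin n, ∫ x in Set.univ.pi (fun i => cell n (σ i)), g (x i - x j)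
      = a (σ i) (σ j) - if i = j then a (σ i) (σ i) else 0 := by
    intro i j
    by_cases h : i = j
    · subst h
      simp [hg0]
    · rw [if_neg h, sub_zero]
      exact cells_eval2 n σ (f := fun p => g (p.1 - p.2)) (by fun_prop) h
  have hdiag : ∀ k, -1 ≤ a k k := by
    intro k
    have h1 : ∀ u ∈ cell n k, -1 ≤ ∫ v in cell n k, g (u - v) := by
      intro u hu
      calc (-1 : ℝ) = ∫ v in cell n k, (-1 : ℝ) := by simp [Measure.real, cell_vol]
        _ ≤ _ := by
          refine setIntegral_mono_on (integrable_const _) (cell_int n k (by fun_prop))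
            measurableSet_Ioc fun v hv => ?_
          simp only [hgdef, rieszKernel]
          rw [neg_le_neg_iff]
          refine Real.rpow_le_one (abs_nonneg _) ?_ (by linarith)
          obtain ⟨h1, h2⟩ := hu
          obtain ⟨h3, h4⟩ := hv
          push_cast at h2 h4
          rw [abs_le]; constructor <;> linarith
    calc (-1 : ℝ) = ∫ v in cell n k, (-1 : ℝ) := by simp [Measure.real, cell_vol]
      _ ≤ _ := by
        have hI : Integrable (fun p : ℝ × ℝ => g (p.1 - p.2))
            ((volume.restrict (cell n k)).prod (volume.restrict (cell n k))) := by
          refine (integrable_box_cont2 n (by fun_prop)).mono_measure ?_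
          exact Measure.prod_mono (Measure.restrict_mono (cell_sub n _) le_rfl)
            (Measure.restrict_mono (cell_sub n _) le_rfl)
        exact setIntegral_mono_on (integrable_const _) hI.integral_prod_left
            measurableSet_Ioc h1
  have hprob : ∀ c : ℝ, ∫ _x in Set.univ.pi (fun i => cell n (σ i)), c = c := by
    intro c
    rw [cells_measure]
    simp
  have J1 : Integrable (fun x : Fin n → ℝ => (1 / 2) * ∑ i, ∑ j, g (x i - x j))
      (volume.restrict (Set.univ.pi (fun i => cell n (σ i)))) :=
    (integrable_finsetSum _ fun i _ => integrable_finsetSum _ fun j _ => hI1 i j).const_mul _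
  have J2 : Integrable (fun x : Fin n → ℝ => ∑ i, ∫ y in box n, g (x i - y))
      (volume.restrict (Set.univ.pi (fun i => cell n (σ i)))) :=
    integrable_finsetSum _ fun i _ => hI2 i
  have J12 : Integrable (fun x : Fin n → ℝ => (1 / 2) * (∑ i, ∑ j, g (x i - x j))
      - ∑ i, ∫ y in box n, g (x i - y))
      (volume.restrict (Set.univ.pi (fun i => cell n (σ i)))) := J1.sub J2
  have hperm2 : ∑ i, ∑ j, a (σ i) (σ j) = ∑ k, ∑ l, a k l := by
    rw [Equiv.sum_comp σ (fun k => ∑ j, a k (σ j))]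
    exact Finset.sum_congr rfl fun k _ => Equiv.sum_comp σ (fun l => a k l)
  have hperm1 : ∑ i, a (σ i) (σ i) = ∑ k, a k k := Equiv.sum_comp σ (fun k => a k k)
  have hd : -(n : ℝ) ≤ ∑ k, a k k := by
    calc -(n:ℝ) = ∑ k : Fin n, (-1 : ℝ) := by simp
      _ ≤ _ := Finset.sum_le_sum fun k _ => hdiag k
  unfold Hok
  rw [integral_add J12 (cells_int n σ continuous_const), integral_sub J1 J2, hprob, htot,
    integral_const_mul, integral_finsetSum _ fun i _ => hI2 i,
    integral_finsetSum _ fun i _ => integrable_finsetSum _ fun j _ => hI1 i j]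
  simp_rw [integral_finsetSum _ fun j _ => hI1 _ j, hpair, cells_eval n σ hc1, hrow]
  rw [Equiv.sum_comp σ (fun k => ∑ l, a k l)]
  simp only [Finset.sum_sub_distrib, Finset.sum_ite_eq, Finset.mem_univ, if_true]
  rw [hperm2, hperm1]
  linarith

lemma cells_exp {s β : ℝ} (hs' : s ≤ -1) (hβ : 0 < β) :
    Real.exp (-β * (n / 2)) ≤
      ∫ x in Set.univ.pi (fun i => cell n (σ i)), Real.exp (-β * Hok n (rieszKernel s) x) := by
  have hc := Hok_cont n (riesz_cont hs')
  have hH := cells_H n σ hs'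
  have hI := cells_int n σ hc
  have hprob : ∀ c : ℝ, ∫ _x in Set.univ.pi (fun i => cell n (σ i)), c = c := by
    intro c
    rw [cells_measure]
    simp
  set m : ℝ := n / 2
  set c := Real.exp (-β * m)
  have h1 : ∀ x, c * (1 + β * m) - c * β * Hok n (rieszKernel s) x
      ≤ Real.exp (-β * Hok n (rieszKernel s) x) := by
    intro x
    have : Real.exp (-β * Hok n (rieszKernel s) x)
        = c * Real.exp (-β * (Hok n (rieszKernel s) x - m)) := by
      rw [← Real.exp_add]; ring_nf
    rw [this]
    have := Real.add_one_le_exp (-β * (Hok n (rieszKernel s) x - m))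
    have hc0 : 0 < c := Real.exp_pos _
    nlinarith
  have hcst := cells_int n σ (continuous_const (y := c * (1 + β * m)))
  have h2 : ∫ x in Set.univ.pi (fun i => cell n (σ i)),
      (c * (1 + β * m) - c * β * Hok n (rieszKernel s) x)
      ≤ ∫ x in Set.univ.pi (fun i => cell n (σ i)), Real.exp (-β * Hok n (rieszKernel s) x) :=
    integral_mono (hcst.sub (hI.const_mul _)) (cells_int n σ (by fun_prop)) h1
  rw [integral_sub hcst (hI.const_mul _), hprob, integral_const_mul] at h2
  have hc0 : 0 < c * β := mul_pos (Real.exp_pos _) hβ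
  nlinarith

end cells

lemma W_lower (n : ℕ) {s β : ℝ} (hs' : s ≤ -1) (hβ : 0 < β) :
    (n:ℝ) ^ n * Real.exp (-(1 + β / 2) * n) ≤
      ∫ x in Set.univ.pi (fun _ : Fin n => box n), Real.exp (-β * Hok n (rieszKernel s) x) := by
  have hc := Hok_cont n (riesz_cont hs')
  have hce : Continuous fun x => Real.exp (-β * Hok n (rieszKernel s) x) := by fun_prop
  have hmeas : ∀ σ : Equiv.Perm (Fin n), MeasurableSet (Set.univ.pi (fun i => cell n (σ i))) :=
    fun σ => MeasurableSet.univ_pi fun i => measurableSet_Ioc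
  have hU : ∫ x in ⋃ σ : Equiv.Perm (Fin n), Set.univ.pi (fun i => cell n (σ i)),
      Real.exp (-β * Hok n (rieszKernel s) x)
      = ∑ σ : Equiv.Perm (Fin n), ∫ x in Set.univ.pi (fun i => cell n (σ i)),
        Real.exp (-β * Hok n (rieszKernel s) x) := by
    refine integral_iUnion_fintype hmeas ?_ (fun σ => cells_int n σ hce)
    intro σ τ hne
    refine Set.disjoint_left.2 fun x h1 h2 => hne ?_
    ext i
    rw [cell_disj n (h1 i trivial) (h2 i trivial)]
  have h1 : ∫ x in ⋃ σ : Equiv.Perm (Fin n), Set.univ.pi (fun i => cell n (σ i)),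
      Real.exp (-β * Hok n (rieszKernel s) x)
      ≤ ∫ x in Set.univ.pi (fun _ : Fin n => box n), Real.exp (-β * Hok n (rieszKernel s) x) :=
    setIntegral_mono_set (boxn_int n hce) (Filter.Eventually.of_forall fun x => (Real.exp_pos _).le)
      (Filter.Eventually.of_forall (Set.iUnion_subset fun σ => cells_sub n σ))
  have h2 : (n.factorial : ℝ) * Real.exp (-β * (n / 2))
      ≤ ∑ σ : Equiv.Perm (Fin n), ∫ x in Set.univ.pi (fun i => cell n (σ i)),
        Real.exp (-β * Hok n (rieszKernel s) x) := by
    calc _ = ∑ σ : Equiv.Perm (Fin n), Real.exp (-β * (n / 2)) := by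
          simp [Fintype.card_perm]
      _ ≤ _ := Finset.sum_le_sum fun σ _ => cells_exp n σ hs' hβ
  have h3 : (n:ℝ) ^ n * Real.exp (-(n:ℝ)) ≤ n.factorial := by
    have := Real.pow_div_factorial_le_exp (n:ℝ) (Nat.cast_nonneg n) n
    rw [div_le_iff₀ (by positivity)] at this
    rw [Real.exp_neg, ← div_eq_mul_inv, div_le_iff₀ (Real.exp_pos _)]
    linarith
  have h4 : (n:ℝ) ^ n * Real.exp (-(1 + β / 2) * n)
      = (n:ℝ) ^ n * Real.exp (-(n:ℝ)) * Real.exp (-β * (n / 2)) := by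
    rw [mul_assoc, ← Real.exp_add]; ring_nf
  rw [h4]
  have h5 := mul_le_mul_of_nonneg_right h3 (Real.exp_pos (-β * (n / 2))).le
  linarith

lemma boxn_vol (n : ℕ) (c : ℝ) :
    ∫ _x in Set.univ.pi (fun _ : Fin n => box n), c = (n:ℝ) ^ n * c := by
  simp [Measure.real, volume_pi_pi, vol_box]

lemma pt_bound {β : ℝ} (hβ : 0 < β) {k : ℝ} (hk : 0 ≤ k) (h : ℝ) :
    h * Real.exp (-β * h) ≤ k * Real.exp (-β * h) + 2 / β * Real.exp (-(β * k / 2)) := by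
  rcases le_total h k with hh | hh
  · have := mul_le_mul_of_nonneg_right hh (Real.exp_pos (-β * h)).le
    have : 0 < 2 / β * Real.exp (-(β * k / 2)) := by positivity
    linarith
  · have h1 : β / 2 * h ≤ Real.exp (β / 2 * h) := by
      linarith [Real.add_one_le_exp (β / 2 * h)]
    have h2 : h ≤ 2 / β * Real.exp (β / 2 * h) := by
      rw [div_mul_eq_mul_div, le_div_iff₀ hβ]; linarith
    have h3 : h * Real.exp (-β * h) ≤ 2 / β * Real.exp (-(β / 2 * h)) := by
      calc _ ≤ 2 / β * Real.exp (β / 2 * h) * Real.exp (-β * h) := by gcongr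
        _ = _ := by rw [mul_assoc, ← Real.exp_add]; ring_nf
    have h4 : Real.exp (-(β / 2 * h)) ≤ Real.exp (-(β * k / 2)) :=
      Real.exp_le_exp.2 (by nlinarith)
    have h5 : 2 / β * Real.exp (-(β / 2 * h)) ≤ 2 / β * Real.exp (-(β * k / 2)) := by gcongr
    have h6 : 0 ≤ k * Real.exp (-β * h) := by positivity
    linarith

/-- **Finite-volume L² transport bound.** For every `s ∈ (−2,−1]` and
`β > 0` there is `C = C(s,β) > 0` such that for every `n ≥ 1` the expected squared
transport cost from the Gibbs configuration to the centered unit lattice under the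
finite-volume Gibbs measure `P_n^{(s,β)}` (density `exp(−β H_n^{(s)})/(nⁿ Z_n^{(s,β)})`
w.r.t. Lebesgue on `(□ₙ)ⁿ`) is at most linear in the volume:
`E_{P_n^{(s,β)}}[∑_j (x_{(j)} − y_j)²] ≤ C n`. -/
theorem finite_volume_L2_transport (s β : ℝ) (hs : -2 < s) (hs' : s ≤ -1) (hβ : 0 < β) :
    ∃ C : ℝ, 0 < C ∧ ∀ n : ℕ, 1 ≤ n →
      (((n : ℝ) ^ n * Zpart s β n)⁻¹ *
        ∫ x in Set.univ.pi (fun _ : Fin n => box n),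
          (∑ j : Fin n, (x (Tuple.sort x j) - latticeY n j) ^ 2) *
            Real.exp (-β * Hgen n (rieszKernel s) x))
        ≤ C * n := by
  obtain ⟨C, hC, hD⟩ := D_bound s hs hs'
  refine ⟨20 + 6 * C * (2 / β + 1) + 12 * C / β, by positivity, fun n hn => ?_⟩
  have hn0 : (0:ℝ) < n := by exact_mod_cast hn
  have hn1 : (1:ℝ) ≤ n := by exact_mod_cast hn
  obtain ⟨c, hc⟩ := Hgen_eq n (rieszKernel s) (riesz_cont hs')
  have hcont := Hok_cont n (riesz_cont hs')
  have hce : Continuous fun x => Real.exp (-β * Hok n (rieszKernel s) x) := by fun_prop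
  have hE : ∀ x, Real.exp (-β * Hgen n (rieszKernel s) x)
      = Real.exp (-β * c) * Real.exp (-β * Hok n (rieszKernel s) x) := by
    intro x
    rw [hc, ← Real.exp_add]; ring_nf
  unfold Zpart
  have hnn : ((n:ℝ) ^ n) ≠ 0 := by positivity
  rw [mul_inv_cancel_left₀ hnn]
  simp_rw [hE, mul_left_comm _ (Real.exp (-β * c)) _, integral_const_mul]
  have hW := W_lower n hs' hβ
  set W := ∫ x in Set.univ.pi (fun _ : Fin n => box n), Real.exp (-β * Hok n (rieszKernel s) x)
    with hWdef
  have hWpos : 0 < W := lt_of_lt_of_le (by positivity) hW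
  rw [mul_inv, mul_mul_mul_comm, inv_mul_cancel₀ (Real.exp_pos _).ne', one_mul,
    inv_mul_le_iff₀ hWpos]
  set k : ℝ := (2 / β + 1) * n with hk
  have hk0 : 0 ≤ k := by positivity
  have hkexp : Real.exp (-(β * k / 2)) = Real.exp (-(1 + β / 2) * n) := by
    congr 1
    rw [hk]
    field_simp
  have i1 : IntegrableOn (fun x => (20 * n + 6 * C * k) * Real.exp (-β * Hok n (rieszKernel s) x))
      (Set.univ.pi (fun _ : Fin n => box n)) := boxn_int n (by fun_prop)
  have i2 : IntegrableOn (fun _ => 6 * C * (2 / β * Real.exp (-(β * k / 2))))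
      (Set.univ.pi (fun _ : Fin n => box n)) := boxn_int n (by fun_prop)
  have hmain : ∫ x in Set.univ.pi (fun _ : Fin n => box n),
      (∑ j : Fin n, (x (Tuple.sort x j) - latticeY n j) ^ 2) *
        Real.exp (-β * Hok n (rieszKernel s) x)
      ≤ ∫ x in Set.univ.pi (fun _ : Fin n => box n),
        ((20 * n + 6 * C * k) * Real.exp (-β * Hok n (rieszKernel s) x)
          + 6 * C * (2 / β * Real.exp (-(β * k / 2)))) := by
    refine integral_mono_of_nonneg (Filter.Eventually.of_forall fun x => ?_) (i1.add i2) ?_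
    · exact mul_nonneg (Finset.sum_nonneg fun j _ => sq_nonneg _) (Real.exp_pos _).le
    · refine (ae_restrict_iff' (MeasurableSet.univ_pi fun i => meas_box n)).2
        (Filter.Eventually.of_forall fun x hx => ?_)
      have hT := T_bound n x (fun i => hx i trivial)
      have hDx := hD n x
      have hT2 : ∑ j : Fin n, (x (Tuple.sort x j) - latticeY n j) ^ 2
          ≤ 20 * n + 6 * C * Hok n (rieszKernel s) x := by linarith
      have h1 := mul_le_mul_of_nonneg_right hT2 (Real.exp_pos (-β * Hok n (rieszKernel s) x)).le
      have h2 := mul_le_mul_of_nonneg_left (pt_bound hβ hk0 (Hok n (rieszKernel s) x))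
        (by positivity : 0 ≤ 6 * C)
      simp only
      linarith
  rw [integral_add i1 i2, integral_const_mul, boxn_vol, hkexp, ← hWdef] at hmain
  have h3 : (n:ℝ) ^ n * (6 * C * (2 / β * Real.exp (-(1 + β / 2) * n))) ≤ 12 * C / β * W := by
    calc _ = 12 * C / β * ((n:ℝ) ^ n * Real.exp (-(1 + β / 2) * n)) := by ring
      _ ≤ _ := by gcongr
  have h4 : 12 * C / β * W ≤ 12 * C / β * W * n :=
    le_mul_of_one_le_right (by positivity) hn1
  calc _ ≤ _ := hmain
    _ ≤ (20 * n + 6 * C * k) * W + 12 * C / β * W * n := by linarith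
    _ = _ := by rw [hk]; ring
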